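/- arXiv:1706.06740 — 2 statements merged into one kernel-verified Lean document; each statement's English description precedes it below -/
import Mathlib

section
/- The KKM lemma: if $C_1, \dots, C_n$ are closed subsets of the unit simplex $\Delta \subseteq \mathbb{R}^n$ such that for every nonempty $J \subseteq \{1,\dots,n\}$ the face $\Delta_J = \operatorname{conv}\{e_j : j \in J\}$ is contained in $\bigcup_{j \in J} C_j$, then $\bigcap_{i=1}^n C_i \neq \emptyset$. -/
open Finset

/-!
The combinatorial core is Scarf's lemma, proved by a parity count in the style of Sperner's lemma.
Applied to the coordinate orders on a fine grid of the simplex, it gives a small cell in which every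
index is either a colour or a coordinate that is almost zero. By compactness, closed sets `F i`
covering the simplex admit a point lying in `F i` for each `i` in its support. For the sets
`{x | x i * ∑ j, f j x ≤ f i x}` this says that the `f i x` are proportional to the `x i`, which is
Brouwer's theorem in disguise; the KKM lemma is the case where `f i` is the distance to `C i`.
-/

section Image

variable {β γ : Type*} [DecidableEq β] [DecidableEq γ] {s : Finset β} {f : β → γ}

theorem image_erase_eq_image_iff {x : β} (hx : x ∈ s) :
    (s.erase x).image f = s.image f ↔ ∃ y ∈ s, y ≠ x ∧ f y = f x := by
  constructor
  · intro h
    obtain ⟨y, hy, hyx⟩ := mem_image.1 (h ▸ mem_image_of_mem f hx)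
    exact ⟨y, mem_of_mem_erase hy, ne_of_mem_erase hy, hyx⟩
  · rintro ⟨y, hy, hyx, hfy⟩
    rw [← insert_erase hx, image_insert, erase_insert (notMem_erase x s), insert_eq_of_mem]
    exact mem_image.2 ⟨y, mem_erase.2 ⟨hyx, hy⟩, hfy⟩

theorem card_filter_image_erase_eq_two (h : #s = #(s.image f) + 1) :
    #{x ∈ s | (s.erase x).image f = s.image f} = 2 := by
  obtain ⟨x, hx, y, hy, hxy, hfxy⟩ := exists_ne_map_eq_of_card_lt_of_maps_to
    (s := s) (t := s.image f) (by lia) (fun _ ↦ mem_image_of_mem f)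
  have hfx : (s.erase x).image f = s.image f :=
    (image_erase_eq_image_iff hx).2 ⟨y, hy, hxy.symm, hfxy.symm⟩
  rw [card_eq_two]
  refine ⟨x, y, hxy, ext fun z ↦ ?_⟩
  simp only [mem_filter, mem_insert, mem_singleton]
  constructor
  · rintro ⟨hz, hfz⟩
    by_contra! hne
    have hzx : z ∈ s.erase x := mem_erase.2 ⟨hne.1, hz⟩
    -- A further redundant point `z` would leave the image of `s` covered by `#s - 2` points.
    have herase : ((s.erase x).erase z).image f = s.image f := by
      rw [← hfx, image_erase_eq_image_iff hzx]
      obtain ⟨w, hw, hwz, hfw⟩ := (image_erase_eq_image_iff hz).1 hfz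
      by_cases hwx : w = x
      · exact ⟨y, mem_erase.2 ⟨hxy.symm, hy⟩, hne.2.symm, by rw [← hfxy, ← hwx, hfw]⟩
      · exact ⟨w, mem_erase.2 ⟨hwx, hw⟩, hwz, hfw⟩
    have hcard : #(((s.erase x).erase z).image f) ≤ #((s.erase x).erase z) := card_image_le
    have := card_erase_add_one hzx
    have := card_erase_add_one hx
    rw [herase] at hcard
    lia
  · rintro (rfl | rfl)
    · exact ⟨hx, hfx⟩
    · exact ⟨hy, (image_erase_eq_image_iff hy).2 ⟨x, hx, hxy, hfxy⟩⟩

theorem image_image_of_subset_range {g : γ → β} (hf : Function.LeftInverse f g)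
    (hs : ∀ x ∈ s, x ∈ Set.range g) : (s.image f).image g = s := by
  rw [image_image, image_congr (g := id), image_id]
  intro x hx
  obtain ⟨i, rfl⟩ := hs x hx
  exact congrArg g (hf i)

end Image

open Classical in
theorem even_card_covBy_image_eq_erase {X ι : Type*} [Fintype X] [Fintype ι] (c : X → ι) (i₀ : ι)
    {σ : Finset X} (hσ : #σ = Fintype.card ι) (hc : σ.image c ≠ univ) :
    Even #{τ | τ ⋖ σ ∧ τ.image c = univ.erase i₀} := by
  rcases eq_empty_or_nonempty {τ | τ ⋖ σ ∧ τ.image c = univ.erase i₀} with h | ⟨τ, hτ⟩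
  · simp [h]
  obtain ⟨hτσ, hcτ⟩ := (mem_filter_univ _).1 hτ
  have hcσ : σ.image c = univ.erase i₀ := by
    have hsub : univ.erase i₀ ⊆ σ.image c := hcτ ▸ image_subset_image hτσ.le
    refine (subset_erase.2 ⟨subset_univ _, fun hi₀ ↦ hc (univ_subset_iff.1 ?_)⟩).antisymm hsub
    rw [← insert_erase (mem_univ i₀)]
    exact insert_subset hi₀ hsub
  have hfacets : ({τ | τ ⋖ σ ∧ τ.image c = univ.erase i₀} : Finset (Finset X)) =
      {x ∈ σ | (σ.erase x).image c = σ.image c}.image σ.erase := by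
    ext τ
    simp only [mem_image, mem_filter, mem_univ, true_and, covBy_iff_exists_erase, hcσ]
    grind
  rw [hfacets, card_image_of_injOn (σ.erase_injOn.mono ?_), card_filter_image_erase_eq_two]
  · exact even_two
  · rw [hcσ, hσ, card_erase_add_one (mem_univ i₀), card_univ]
  · exact fun x hx ↦ (mem_filter.1 hx).1

section Dominant

variable {ι X α : Type*}

/-- A finite set `σ` is dominant, in the sense of Scarf, for the preorders given by the functions
`u i` if no point lies strictly above the `u i`-minimum of `σ` for every `i`. -/
def IsDominant [LE α] (u : ι → X → α) (σ : Finset X) : Prop :=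
  ∀ y, ∃ i, ∀ x ∈ σ, u i y ≤ u i x

theorem IsDominant.mono [LE α] {u : ι → X → α} {σ τ : Finset X} (hσ : IsDominant u σ)
    (hτσ : τ ⊆ σ) : IsDominant u τ := fun y ↦ (hσ y).imp fun _ hi x hx ↦ hi x (hτσ hx)

/-- The family `a` selects, for each index `i`, a point of `σ` minimizing `u i`. -/
structure IsArgmin [LE α] (u : ι → X → α) (σ : Finset X) (a : ι → X) : Prop where
  mem (i : ι) : a i ∈ σ
  le (i : ι) {x : X} (hx : x ∈ σ) : u i (a i) ≤ u i x

/-- The set of points lying strictly above `a l` in the order `u l` for every index `l ≠ k`. When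
`a` selects the minima of a dominant set, the candidates for extending that set are the points of
this set that are maximal for `u k`. -/
def upperRegion [LT α] (u : ι → X → α) (a : ι → X) (k : ι) : Set X :=
  {x | ∀ l ≠ k, u l (a l) < u l x}

variable [LinearOrder α] {u : ι → X → α} {a : ι → X} {σ τ : Finset X}

theorem exists_isArgmin (u : ι → X → α) (hσ : σ.Nonempty) : ∃ a, IsArgmin u σ a := by
  choose a ha hle using fun i ↦ σ.exists_min_image (u i) hσ
  exact ⟨a, ha, fun i x hx ↦ hle i x hx⟩

theorem IsArgmin.exists_eq (ha : IsArgmin u σ a) (hu : ∀ i, (u i).Injective)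
    (hσ : IsDominant u σ) {x : X} (hx : x ∈ σ) : ∃ i, a i = x :=
  (hσ x).imp fun i hi ↦ hu i ((ha.le i hx).antisymm (hi _ (ha.mem i)))

theorem IsArgmin.image_univ_eq [Fintype ι] [DecidableEq X] (ha : IsArgmin u σ a)
    (hu : ∀ i, (u i).Injective) (hσ : IsDominant u σ) : univ.image a = σ := by
  ext x
  simp only [mem_image, mem_univ, true_and]
  exact ⟨fun ⟨i, hi⟩ ↦ hi ▸ ha.mem i, ha.exists_eq hu hσ⟩

theorem IsArgmin.injective [Fintype ι] (ha : IsArgmin u σ a) (hu : ∀ i, (u i).Injective)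
    (hσ : IsDominant u σ) (hcard : #σ = Fintype.card ι) : a.Injective := by
  classical
  rw [← Set.injOn_univ, ← coe_univ, ← card_image_iff, ha.image_univ_eq hu hσ, hcard, card_univ]

theorem IsArgmin.index_eq_of_mem_upperRegion (ha : IsArgmin u τ a) {k i : ι} {y : X}
    (hy : y ∈ upperRegion u a k) (hi : ∀ x ∈ τ, u i y ≤ u i x) : i = k := by
  by_contra hik
  exact (hy i hik).not_ge (hi _ (ha.mem i))

theorem IsArgmin.isDominant_insert [DecidableEq X] (ha : IsArgmin u τ a) (hτ : IsDominant u τ)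
    {k : ι} {x : X} (hx : x ∈ upperRegion u a k) (hmax : IsMaxOn (u k) (upperRegion u a k) x) :
    IsDominant u (insert x τ) := by
  intro y
  by_cases hy : y ∈ upperRegion u a k
  · obtain ⟨i, hi⟩ := hτ x
    obtain rfl := ha.index_eq_of_mem_upperRegion hx hi
    exact ⟨i, forall_mem_insert .. |>.2 ⟨hmax hy, fun t ht ↦ (hmax hy).trans (hi t ht)⟩⟩
  · obtain ⟨l, hlk, hl⟩ : ∃ l ≠ k, u l y ≤ u l (a l) := by simpa [upperRegion] using hy
    exact ⟨l, forall_mem_insert .. |>.2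
      ⟨hl.trans (hx l hlk).le, fun t ht ↦ hl.trans (ha.le l ht)⟩⟩

/-- The index `k` is the one whose minimum over the extended set is the new point. -/
theorem IsArgmin.exists_isMaxOn_of_isDominant_insert [Fintype ι] [DecidableEq ι] [DecidableEq X]
    (ha : IsArgmin u τ a) (hu : ∀ i, (u i).Injective) (hcard : #τ + 1 = Fintype.card ι) {x : X}
    (hxτ : x ∉ τ) (hx : IsDominant u (insert x τ)) :
    ∃ k, (univ.erase k).image a = τ ∧ x ∈ upperRegion u a k ∧
      IsMaxOn (u k) (upperRegion u a k) x := by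
  obtain ⟨b, hb⟩ := exists_isArgmin u (insert_nonempty x τ)
  have hbinj : b.Injective := hb.injective hu hx (by rw [card_insert_of_notMem hxτ, hcard])
  obtain ⟨k, hk⟩ := hb.exists_eq hu hx (mem_insert_self x τ)
  have hbx {l : ι} (hl : l ≠ k) : b l ≠ x := hk ▸ hbinj.ne hl
  have hba {l : ι} (hl : l ≠ k) : b l = a l :=
    hu l ((hb.le l (mem_insert_of_mem (ha.mem l))).antisymm
      (ha.le l (mem_of_mem_insert_of_ne (hb.mem l) (hbx hl))))
  refine ⟨k, ext fun t ↦ ?_, fun l hl ↦ ?_, fun y hy ↦ ?_⟩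
  · simp only [mem_image, mem_erase, mem_univ, and_true]
    refine ⟨fun ⟨l, _, hl⟩ ↦ hl ▸ ha.mem l, fun ht ↦ ?_⟩
    obtain ⟨l, rfl⟩ := hb.exists_eq hu hx (mem_insert_of_mem ht)
    have hlk : l ≠ k := by
      rintro rfl
      exact hxτ (hk ▸ ht)
    exact ⟨l, hlk, (hba hlk).symm⟩
  · rw [← hba hl]
    exact (hb.le l (mem_insert_self x τ)).lt_of_ne ((hu l).ne (hbx hl))
  · obtain ⟨i, hi⟩ := hx y
    obtain rfl := ha.index_eq_of_mem_upperRegion hy fun t ht ↦ hi t (mem_insert_of_mem ht)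
    exact hi x (mem_insert_self x τ)

theorem notMem_of_mem_upperRegion [Fintype ι] [DecidableEq ι] [DecidableEq X] {k : ι} {x : X}
    (hk : (univ.erase k).image a = τ) (hx : x ∈ upperRegion u a k) : x ∉ τ := by
  rw [← hk, mem_image]
  rintro ⟨l, hl, rfl⟩
  exact (hx l (ne_of_mem_erase hl)).false

open Classical in
/-- The two extensions correspond to the two indices at which the minima of `τ` coincide. -/
theorem IsArgmin.card_covBy_isDominant_eq_two [Fintype ι] [Fintype X] (ha : IsArgmin u τ a)
    (hu : ∀ i, (u i).Injective) (hτ : IsDominant u τ) (hcard : #τ + 1 = Fintype.card ι)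
    (hupper : ∀ k, (upperRegion u a k).Nonempty) :
    #{σ | τ ⋖ σ ∧ IsDominant u σ} = 2 := by
  choose m hm hmax using fun k ↦
    (upperRegion u a k).exists_max_image (u k) (Set.toFinite _) (hupper k)
  have himage := ha.image_univ_eq hu hτ
  rw [← card_filter_image_erase_eq_two (s := univ) (f := a) (by rw [himage, hcard, card_univ])]
  simp only [himage]
  symm
  refine card_nbij (fun k ↦ insert (m k) τ) (fun k hk ↦ ?_) (fun k hk k' _ h ↦ ?_) ?_
  · have hmτ := notMem_of_mem_upperRegion ((mem_filter_univ k).1 hk) (hm k)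
    exact (mem_filter_univ _).2 ⟨covBy_insert hmτ, ha.isDominant_insert hτ (hm k) (hmax k)⟩
  · have hmτ := notMem_of_mem_upperRegion ((mem_filter_univ k).1 hk) (hm k)
    have hmm : m k = m k' := (insert_inj hmτ).1 h
    obtain ⟨i, hi⟩ := hτ (m k)
    rw [← ha.index_eq_of_mem_upperRegion (hm k) hi]
    exact ha.index_eq_of_mem_upperRegion (hmm ▸ hm k') hi
  · intro σ hσ
    obtain ⟨hcov, hdom⟩ := (mem_filter_univ σ).1 hσ
    obtain ⟨x, hxτ, rfl⟩ := hcov.exists_finset_insert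
    obtain ⟨k, hk, hx, hxmax⟩ := ha.exists_isMaxOn_of_isDominant_insert hu hcard hxτ hdom
    have hmx : m k = x := hu k ((hxmax (hm k)).antisymm (hmax k x hx))
    exact ⟨k, (mem_filter_univ k).2 hk, congrArg (insert · τ) hmx⟩

end Dominant

section Scarf

variable {ι X α : Type*} [LinearOrder α] {u : ι → X → α} {s : ι → X}

/-- The points `s i` are slack points for `u`: `s i` is least for `u i`, and for every other `u k`
it lies above all points that are not slack. They play the role of the boundary of the simplex. -/
structure IsSlack (u : ι → X → α) (s : ι → X) : Prop where
  le (i : ι) (x : X) : u i (s i) ≤ u i x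
  lt {i k : ι} (hki : k ≠ i) {x : X} (hx : x ∉ Set.range s) : u k x < u k (s i)

theorem IsSlack.lt_self (hs : IsSlack u s) (hu : ∀ i, (u i).Injective) (i : ι) {x : X}
    (hx : x ∉ Set.range s) : u i (s i) < u i x :=
  (hs.le i x).lt_of_ne ((hu i).ne fun h ↦ hx ⟨i, h⟩)

variable [Fintype ι]

theorem IsSlack.isDominant_insert_iff [DecidableEq ι] [DecidableEq X] (hs : IsSlack u s)
    (hu : ∀ i, (u i).Injective) (hX : ∃ y, y ∉ Set.range s) {i₀ : ι} {x : X}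
    (hx : x ∉ (univ.erase i₀).image s) :
    IsDominant u (insert x ((univ.erase i₀).image s)) ↔
      x ∉ Set.range s ∧ IsMaxOn (u i₀) (Set.range s)ᶜ x := by
  constructor
  · intro hdom
    have hle {y : X} (hy : y ∉ Set.range s) : u i₀ y ≤ u i₀ x := by
      obtain ⟨i, hi⟩ := hdom y
      obtain rfl : i = i₀ := by
        by_contra h
        exact (hs.lt_self hu i hy).not_ge (hi _ (mem_insert_of_mem
          (mem_image_of_mem s (mem_erase.2 ⟨h, mem_univ i⟩))))
      exact hi x (mem_insert_self x _)
    refine ⟨?_, fun y hy ↦ hle hy⟩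
    rintro ⟨k, rfl⟩
    obtain rfl : k = i₀ := by
      by_contra h
      exact hx (mem_image_of_mem s (mem_erase.2 ⟨h, mem_univ k⟩))
    obtain ⟨y, hy⟩ := hX
    exact (hs.lt_self hu k hy).not_ge (hle hy)
  · rintro ⟨-, hmax⟩ y
    by_cases hy : y ∈ Set.range s
    · obtain ⟨k, rfl⟩ := hy
      exact ⟨k, fun z _ ↦ hs.le k z⟩
    · refine ⟨i₀, forall_mem_insert .. |>.2 ⟨hmax hy, forall_mem_image.2 fun k hk ↦ ?_⟩⟩
      exact (hs.lt (ne_of_mem_erase hk).symm hy).le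

open Classical in
theorem IsSlack.card_covBy_isDominant_eq_one [Fintype X] (hs : IsSlack u s)
    (hu : ∀ i, (u i).Injective) (hX : ∃ y, y ∉ Set.range s) (i₀ : ι) :
    #{σ | (univ.erase i₀).image s ⋖ σ ∧ IsDominant u σ} = 1 := by
  obtain ⟨m, hm, hmax⟩ := (Set.range s)ᶜ.exists_max_image (u i₀) (Set.toFinite _) hX
  have hmF : m ∉ (univ.erase i₀).image s := fun h ↦ by
    obtain ⟨k, -, rfl⟩ := mem_image.1 h
    exact hm ⟨k, rfl⟩
  rw [card_eq_one]
  refine ⟨insert m ((univ.erase i₀).image s), ext fun σ ↦ ?_⟩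
  rw [mem_filter_univ, mem_singleton]
  constructor
  · rintro ⟨hcov, hdom⟩
    obtain ⟨x, hxF, rfl⟩ := hcov.exists_finset_insert
    obtain ⟨hx, hxmax⟩ := (hs.isDominant_insert_iff hu hX hxF).1 hdom
    rw [hu i₀ ((hxmax hm).antisymm (hmax x hx))]
  · rintro rfl
    exact ⟨covBy_insert hmF, (hs.isDominant_insert_iff hu hX hmF).2 ⟨hm, hmax⟩⟩

open Classical in
theorem IsSlack.even_card_covBy_isDominant [Fintype X] (hs : IsSlack u s)
    (hu : ∀ i, (u i).Injective) {τ : Finset X} (hτ : ∃ z ∈ τ, z ∉ Set.range s) :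
    Even #{σ | τ ⋖ σ ∧ #σ = Fintype.card ι ∧ IsDominant u σ} := by
  rcases eq_empty_or_nonempty {σ | τ ⋖ σ ∧ #σ = Fintype.card ι ∧ IsDominant u σ} with h | ⟨σ, hσ⟩
  · simp [h]
  obtain ⟨hcov, hcard, hdom⟩ := (mem_filter_univ σ).1 hσ
  obtain ⟨z, hzτ, hz⟩ := hτ
  obtain ⟨a, ha⟩ := exists_isArgmin u ⟨z, hzτ⟩
  have hτcard {σ : Finset X} (h : τ ⋖ σ) : #τ + 1 = #σ := Nat.covBy_iff_add_one_eq.1 h.card_finset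
  have htwo := ha.card_covBy_isDominant_eq_two hu (hdom.mono hcov.le)
    ((hτcard hcov).trans hcard) fun k ↦ ⟨s k, fun l hl ↦ (ha.le l hzτ).trans_lt (hs.lt hl hz)⟩
  have hcongr : #{σ | τ ⋖ σ ∧ #σ = Fintype.card ι ∧ IsDominant u σ} =
      #{σ | τ ⋖ σ ∧ IsDominant u σ} :=
    congrArg card <| filter_congr fun σ' _ ↦ and_congr_right fun h ↦
      and_iff_right ((hτcard h).symm.trans ((hτcard hcov).trans hcard))
  rw [hcongr, htwo]
  exact even_two

open Classical in
/-- The only facet with an odd number of dominant extensions is the one of slack points. -/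
theorem IsSlack.odd_sum_card_covBy_isDominant [Fintype X] (hs : IsSlack u s)
    (hu : ∀ i, (u i).Injective) (hX : ∃ y, y ∉ Set.range s) {c : X → ι}
    (hc : Function.LeftInverse c s) (i₀ : ι) :
    Odd (∑ τ with τ.image c = univ.erase i₀,
      #{σ | τ ⋖ σ ∧ #σ = Fintype.card ι ∧ IsDominant u σ}) := by
  let slackFacet : Finset X := (univ.erase i₀).image s
  have himage : slackFacet.image c = univ.erase i₀ := by
    rw [image_image, hc.comp_eq_id, image_id]
  have hcard {σ : Finset X} (h : slackFacet ⋖ σ) : #σ = Fintype.card ι := by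
    rw [← Nat.covBy_iff_add_one_eq.1 h.card_finset, card_image_of_injective _ hc.injective,
      card_erase_add_one (mem_univ i₀), card_univ]
  have hone : #{σ | slackFacet ⋖ σ ∧ #σ = Fintype.card ι ∧ IsDominant u σ} = 1 := by
    rw [← hs.card_covBy_isDominant_eq_one hu hX i₀]
    exact congrArg card <| filter_congr fun σ _ ↦ and_congr_right fun h ↦ and_iff_right (hcard h)
  rw [← add_sum_erase _ _ ((mem_filter_univ slackFacet).2 himage), hone]
  refine Even.one_add (even_sum _ fun τ hτ ↦ hs.even_card_covBy_isDominant hu ?_)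
  obtain ⟨hne, hτ⟩ := mem_erase.1 hτ
  by_contra! h
  refine hne ((image_image_of_subset_range hc h).symm.trans ?_)
  rw [(mem_filter_univ τ).1 hτ]

/-- **Scarf's lemma** for injective orders with slack points. -/
theorem IsSlack.exists_isDominant [Finite X] [Nonempty ι] (hs : IsSlack u s)
    (hu : ∀ i, (u i).Injective) (hX : ∃ y, y ∉ Set.range s) {c : X → ι}
    (hc : Function.LeftInverse c s) :
    ∃ σ : Finset X, #σ = Fintype.card ι ∧ (∀ i, ∃ x ∈ σ, c x = i) ∧ IsDominant u σ := by
  classical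
  cases nonempty_fintype X
  by_contra! hcon
  obtain ⟨i₀⟩ := ‹Nonempty ι›
  let rooms : Finset (Finset X) := {σ | #σ = Fintype.card ι ∧ IsDominant u σ}
  let doors : Finset (Finset X) := {τ | τ.image c = univ.erase i₀}
  have hcount : ∑ τ ∈ doors, #{σ ∈ rooms | τ ⋖ σ} = ∑ σ ∈ rooms, #{τ ∈ doors | τ ⋖ σ} :=
    sum_card_bipartiteAbove_eq_sum_card_bipartiteBelow (· ⋖ ·)
  have heven : Even (∑ σ ∈ rooms, #{τ ∈ doors | τ ⋖ σ}) := by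
    refine even_sum _ fun σ hσ ↦ ?_
    obtain ⟨hcard, hdom⟩ := (mem_filter_univ σ).1 hσ
    simpa only [doors, filter_filter, and_comm] using
      even_card_covBy_image_eq_erase c i₀ hcard fun h ↦
        hcon σ hcard (fun i ↦ mem_image.1 (h ▸ mem_univ i)) hdom
  have hodd : Odd (∑ τ ∈ doors, #{σ ∈ rooms | τ ⋖ σ}) := by
    simpa only [doors, rooms, filter_filter, and_comm, and_assoc] using
      hs.odd_sum_card_covBy_isDominant hu hX hc i₀
  exact Nat.not_even_iff_odd.2 hodd (hcount ▸ heven)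

end Scarf

/-- **Scarf's lemma** without slack points: these are added as a disjoint copy of `ι`, and ties are
broken by a numbering of the points. -/
theorem exists_finset_forall_exists_color_le {ι X α : Type*} [Finite ι] [Finite X] [Nonempty X]
    [LinearOrder α] (u : ι → X → α) (c : X → ι) :
    ∃ σ : Finset X, ∀ y, ∃ w ∈ σ, ∀ x ∈ σ, u (c w) y ≤ u (c w) x := by
  classical
  cases nonempty_fintype ι
  cases nonempty_fintype X
  obtain ⟨x₀⟩ := id ‹Nonempty X›
  have : Nonempty ι := ⟨c x₀⟩
  let v (i : ι) : X ⊕ ι → WithBot (WithTop α) :=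
    Sum.elim (fun x ↦ ↑(↑(u i x) : WithTop α)) fun j ↦ if j = i then ⊥ else ↑(⊤ : WithTop α)
  let number := Fintype.equivFin (X ⊕ ι)
  let v' (i : ι) (z : X ⊕ ι) : WithBot (WithTop α) ×ₗ Fin (Fintype.card (X ⊕ ι)) :=
    toLex (v i z, number z)
  have hlt {i : ι} {y z : X ⊕ ι} (h : v i y < v i z) : v' i y < v' i z :=
    Prod.Lex.toLex_lt_toLex.2 (Or.inl h)
  have hslack : IsSlack v' Sum.inr := by
    refine ⟨fun i z ↦ ?_, fun {i k} hki z hz ↦ hlt ?_⟩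
    · by_cases hz : z = Sum.inr i
      · rw [hz]
      · refine (hlt ?_).le
        rcases z with x | j <;> grind [WithBot.bot_lt_coe]
    · rcases z with x | j
      · simpa [v, hki.symm] using WithBot.coe_lt_coe.2 (WithTop.coe_lt_top (u k x))
      · exact absurd ⟨j, rfl⟩ hz
  obtain ⟨σ, -, hσc, hσ⟩ := hslack.exists_isDominant (c := Sum.elim c id)
    (fun i y z h ↦ number.injective (congrArg Prod.snd (toLex.injective h)))
    ⟨Sum.inl x₀, by simp⟩ (fun _ ↦ rfl)
  refine ⟨σ.toLeft, fun y ↦ ?_⟩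
  obtain ⟨i, hi⟩ := hσ (Sum.inl y)
  have hle {z : X ⊕ ι} (hz : z ∈ σ) : v i (Sum.inl y) ≤ v i z :=
    le_of_not_gt fun h ↦ (hi z hz).not_gt (hlt h)
  obtain ⟨w | j, hw, rfl⟩ := hσc i
  · exact ⟨w, mem_toLeft.2 hw, fun x hx ↦ by simpa [v] using hle (mem_toLeft.1 hx)⟩
  · simpa [v] using hle hw

section Grid

variable {ι : Type*} [Fintype ι]

theorem lt_add_of_le_of_sum_lt {x m : ι → ℕ} {d : ℕ} (hle : m ≤ x)
    (hsum : ∑ i, x i < ∑ i, m i + d) (k : ι) : x k < m k + d := by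
  classical
  have hm := add_sum_erase univ m (mem_univ k)
  have hx := add_sum_erase univ x (mem_univ k)
  have := sum_le_sum fun i (_ : i ∈ univ.erase k) ↦ hle i
  lia

variable [DecidableEq ι]

theorem lt_sum_add_one_of_forall_exists_le {N : ℕ} {s : Finset ι} {m : ι → ℕ} (hs : s.Nonempty)
    (h : ∀ y ∈ piAntidiag univ N, ∃ i ∈ s, y i ≤ m i) : N < ∑ i ∈ s, (m i + 1) := by
  by_contra! hN
  obtain ⟨j, -⟩ := hs
  let y : ι → ℕ := (fun i ↦ if i ∈ s then m i + 1 else 0) +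
    Pi.single j (N - ∑ i ∈ s, (m i + 1))
  obtain ⟨i, hi, hyi⟩ := h y <| by
    simp only [mem_piAntidiag, y, Pi.add_apply, sum_add_distrib, sum_ite_mem, univ_inter,
      sum_pi_single', mem_univ, if_true, implies_true, and_true]
    simp only [sum_add_distrib] at hN
    lia
  simp only [y, Pi.add_apply, if_pos hi] at hyi
  lia

theorem exists_grid_cell [Nonempty ι] (N : ℕ) (c : piAntidiag (univ : Finset ι) N → ι) :
    ∃ (σ : Finset (piAntidiag (univ : Finset ι) N)) (m : ι → ℕ), σ.Nonempty ∧
      (∀ x ∈ σ, ∀ k, m k ≤ x.1 k ∧ x.1 k < m k + Fintype.card ι) ∧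
      ∀ i, m i = 0 ∨ ∃ x ∈ σ, c x = i := by
  have hX : Nonempty (piAntidiag (univ : Finset ι) N) :=
    ⟨Pi.single (Classical.arbitrary ι) N, by simp [mem_piAntidiag]⟩
  obtain ⟨σ, hσ⟩ := exists_finset_forall_exists_color_le (fun i x ↦ x.1 i) c
  have hσne : σ.Nonempty := (hσ hX.some).imp fun _ hw ↦ hw.1
  choose p hpσ hp using fun i ↦ σ.exists_min_image (fun x ↦ x.1 i) hσne
  let m (i : ι) : ℕ := if i ∈ σ.image c then (p i).1 i else 0
  have hm {x} (hx : x ∈ σ) : m ≤ x.1 := fun k ↦ by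
    by_cases hk : k ∈ σ.image c
    · simpa only [m, if_pos hk] using hp k x hx
    · simp only [m, if_neg hk, Nat.zero_le]
  have hlt : N < ∑ i, m i + Fintype.card ι := calc
    N < ∑ i ∈ σ.image c, ((p i).1 i + 1) :=
      lt_sum_add_one_of_forall_exists_le (hσne.image c) fun y hy ↦ by
        obtain ⟨w, hw, hwy⟩ := hσ ⟨y, hy⟩
        exact ⟨c w, mem_image_of_mem c hw, hwy _ (hpσ _)⟩
    _ = ∑ i, m i + #(σ.image c) := by
      simp only [m, sum_add_distrib, sum_ite_mem, univ_inter, card_eq_sum_ones]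
    _ ≤ ∑ i, m i + Fintype.card ι := by
      gcongr
      exact card_le_univ _
  refine ⟨σ, m, hσne, fun x hx k ↦ ⟨hm hx k, lt_add_of_le_of_sum_lt (hm hx) ?_ k⟩, fun i ↦ ?_⟩
  · rwa [(mem_piAntidiag.1 x.2).1]
  · by_cases hi : i ∈ σ.image c
    · exact Or.inr (mem_image.1 hi)
    · exact Or.inl (if_neg hi)

end Grid

section Simplex

variable {ι : Type*} [Fintype ι]

theorem div_mem_stdSimplex {N : ℕ} (hN : N ≠ 0) {a : ι → ℕ} (ha : ∑ i, a i = N) :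
    (fun i ↦ (a i : ℝ) / N) ∈ stdSimplex ℝ ι := by
  refine ⟨fun i ↦ by positivity, ?_⟩
  rw [← sum_div, ← Nat.cast_sum, ha]
  exact div_self (Nat.cast_ne_zero.2 hN)

variable [Nonempty ι]

theorem exists_mem_stdSimplex_forall_lt_or_dist_lt {F : ι → Set (ι → ℝ)}
    (hcover : stdSimplex ℝ ι ⊆ ⋃ i, F i) {ε : ℝ} (hε : 0 < ε) :
    ∃ x ∈ stdSimplex ℝ ι, ∀ i, x i < ε ∨ ∃ w ∈ F i, dist x w < ε := by
  classical
  obtain ⟨N, hN⟩ := exists_nat_gt (Fintype.card ι / ε)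
  have hN0 : 0 < (N : ℝ) := lt_of_le_of_lt (by positivity) hN
  have hdε : (Fintype.card ι : ℝ) / N < ε := (div_lt_comm₀ hε hN0).1 hN
  let r (a : piAntidiag (univ : Finset ι) N) (i : ι) : ℝ := a.1 i / N
  have hr (a) : r a ∈ stdSimplex ℝ ι :=
    div_mem_stdSimplex (Nat.cast_ne_zero.1 hN0.ne') (mem_piAntidiag.1 a.2).1
  choose c hc using fun a ↦ Set.mem_iUnion.1 (hcover (hr a))
  obtain ⟨σ, m, ⟨x, hx⟩, hσ, hm⟩ := exists_grid_cell N c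
  refine ⟨r x, hr x, fun i ↦ (hm i).imp (fun hmi ↦ ?_) ?_⟩
  · refine lt_of_le_of_lt ?_ hdε
    have := (hσ x hx i).2
    simp only [r]
    gcongr
    lia
  · rintro ⟨w, hw, rfl⟩
    refine ⟨r w, hc w, (dist_pi_lt_iff hε).2 fun k ↦ lt_of_le_of_lt ?_ hdε⟩
    obtain ⟨hxm, hxd⟩ := hσ x hx k
    obtain ⟨hwm, hwd⟩ := hσ w hw k
    rw [Real.dist_eq, ← sub_div, abs_div, Nat.abs_cast]
    gcongr
    rw [abs_sub_le_iff, sub_le_iff_le_add, sub_le_iff_le_add]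
    norm_cast
    lia

theorem exists_mem_stdSimplex_forall_eq_zero_or_mem {F : ι → Set (ι → ℝ)}
    (hF : ∀ i, IsClosed (F i)) (hcover : stdSimplex ℝ ι ⊆ ⋃ i, F i) :
    ∃ x ∈ stdSimplex ℝ ι, ∀ i, x i = 0 ∨ x ∈ F i := by
  obtain ⟨ε, -, hεpos, hε⟩ := exists_seq_strictAnti_tendsto (0 : ℝ)
  choose x hx hxF using fun n ↦ exists_mem_stdSimplex_forall_lt_or_dist_lt hcover (hεpos n)
  obtain ⟨y, hy, φ, hφ, hxy⟩ := (isCompact_stdSimplex ℝ ι).tendsto_subseq hx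
  have hεφ : Filter.Tendsto (ε ∘ φ) Filter.atTop (nhds 0) := hε.comp hφ.tendsto_atTop
  refine ⟨y, hy, fun i ↦ or_iff_not_imp_left.2 fun hyi ↦ ?_⟩
  have hclose : ∀ᶠ n in Filter.atTop, ∃ w, w ∈ F i ∧ dist (x (φ n)) w < ε (φ n) :=
    (hεφ.eventually_lt (tendsto_pi_nhds.1 hxy i) ((hy.1 i).lt_of_ne' hyi)).mono
      fun n hn ↦ (hxF (φ n) i).resolve_left hn.not_gt
  obtain ⟨w, hw⟩ := hclose.choice
  have hwy : Filter.Tendsto w Filter.atTop (nhds y) := hxy.congr_dist <|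
    squeeze_zero' (.of_forall fun _ ↦ dist_nonneg) (hw.mono fun _ h ↦ h.2.le) hεφ
  exact (hF i).mem_of_tendsto hwy (hw.mono fun _ h ↦ h.1)

theorem exists_mem_stdSimplex_forall_mul_sum_eq {f : ι → (ι → ℝ) → ℝ}
    (hf : ∀ i, ContinuousOn (f i) (stdSimplex ℝ ι)) (hf0 : ∀ i, ∀ x ∈ stdSimplex ℝ ι, 0 ≤ f i x) :
    ∃ x ∈ stdSimplex ℝ ι, ∀ i, x i * ∑ j, f j x = f i x := by
  obtain ⟨x, hx, hxF⟩ := exists_mem_stdSimplex_forall_eq_zero_or_mem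
    (F := fun i ↦ {x ∈ stdSimplex ℝ ι | x i * ∑ j, f j x ≤ f i x})
    (fun i ↦ (isClosed_stdSimplex ℝ ι).isClosed_le (by fun_prop) (hf i)) fun x hx ↦ by
      obtain ⟨i, -, hi⟩ := exists_le_of_sum_le (s := univ) univ_nonempty
        (f := fun i ↦ x i * ∑ j, f j x) (g := fun i ↦ f i x) (by rw [← sum_mul, hx.2, one_mul])
      exact Set.mem_iUnion.2 ⟨i, hx, hi⟩
  have hle (i) : x i * ∑ j, f j x ≤ f i x := (hxF i).elim
    (fun h ↦ by simpa only [h, zero_mul] using hf0 i x hx) And.right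
  have heq := (sum_eq_sum_iff_of_le fun i (_ : i ∈ univ) ↦ hle i).1
    (by rw [← sum_mul, hx.2, one_mul])
  exact ⟨x, hx, fun i ↦ heq i (mem_univ i)⟩

theorem exists_mem_stdSimplex_forall_mem {C : ι → Set (ι → ℝ)} (hC : ∀ i, IsClosed (C i))
    (hcover : ∀ x ∈ stdSimplex ℝ ι, ∃ i, x i ≠ 0 ∧ x ∈ C i) :
    ∃ x ∈ stdSimplex ℝ ι, ∀ i, x ∈ C i := by
  classical
  have hne (i : ι) : (C i).Nonempty := by
    obtain ⟨j, hj, hjC⟩ := hcover _ (single_mem_stdSimplex ℝ i)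
    obtain rfl : j = i := by
      by_contra h
      exact hj (Pi.single_eq_of_ne h 1)
    exact ⟨_, hjC⟩
  obtain ⟨x, hx, heq⟩ := exists_mem_stdSimplex_forall_mul_sum_eq
    (f := fun i x ↦ Metric.infDist x (C i))
    (fun i ↦ (Metric.continuous_infDist_pt (C i)).continuousOn) (fun _ _ _ ↦ Metric.infDist_nonneg)
  obtain ⟨j, hj, hjC⟩ := hcover x hx
  have hsum : ∑ i, Metric.infDist x (C i) = 0 :=
    (mul_eq_zero.1 ((heq j).trans (Metric.infDist_zero_of_mem hjC))).resolve_left hj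
  refine ⟨x, hx, fun i ↦ ((hC i).mem_iff_infDist_zero (hne i)).2 ?_⟩
  rw [← heq i, hsum, mul_zero]

end Simplex

theorem sum_smul_mem_convexHull_image_support {ι E : Type*} [Fintype ι] [AddCommGroup E]
    [Module ℝ E] (e : ι → E) {x : ι → ℝ} (hx : x ∈ stdSimplex ℝ ι) :
    ∑ i, x i • e i ∈ convexHull ℝ (e '' Function.support x) := by
  classical
  have hsum : ∑ i with x i ≠ 0, x i • e i = ∑ i, x i • e i :=
    sum_filter_of_ne fun i _ h ↦ (smul_ne_zero_iff.1 h).1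
  rw [← hsum]
  exact (convex_convexHull ℝ _).sum_mem (fun i _ ↦ hx.1 i) ((sum_filter_ne_zero univ).trans hx.2)
    fun i hi ↦ subset_convexHull ℝ _ ⟨i, (mem_filter.1 hi).2, rfl⟩

/-- The form of the KKM lemma due to Ky Fan: barycentric combinations of the `e i` map the simplex
to `E`, along which the sets `C i` are pulled back. -/
theorem KKM_lemma_general {ι E : Type*} [Finite ι] [AddCommGroup E] [Module ℝ E]
    [TopologicalSpace E] [ContinuousAdd E] [ContinuousSMul ℝ E] (e : ι → E) (C : ι → Set E)
    (hclosed : ∀ i, IsClosed (C i))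
    (hcover : ∀ J : Finset ι, J.Nonempty → convexHull ℝ (e '' ↑J) ⊆ ⋃ j ∈ J, C j) :
    (⋂ i, C i).Nonempty := by
  classical
  cases nonempty_fintype ι
  rcases isEmpty_or_nonempty ι with hι | hι
  · simp
  let Φ (x : ι → ℝ) : E := ∑ i, x i • e i
  have hΦ : Continuous Φ := by fun_prop
  obtain ⟨x, -, hx⟩ := exists_mem_stdSimplex_forall_mem (C := fun i ↦ Φ ⁻¹' C i)
    (fun i ↦ (hclosed i).preimage hΦ) fun x hx ↦ by
      let J : Finset ι := {i | x i ≠ 0}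
      have hJ : J.Nonempty := nonempty_of_sum_ne_zero (f := x) (by
        rw [sum_filter_ne_zero, hx.2]
        exact one_ne_zero)
      have hmem : Φ x ∈ convexHull ℝ (e '' J) := by
        simpa [J, Function.support] using sum_smul_mem_convexHull_image_support e hx
      obtain ⟨j, hj, hjC⟩ := Set.mem_iUnion₂.1 (hcover J hJ hmem)
      exact ⟨j, (mem_filter_univ j).1 hj, hjC⟩
  exact ⟨Φ x, Set.mem_iInter.2 hx⟩

/-- The KKM lemma: if `C 1, …, C n` are closed subsets of the unit simplex such that each
face `Δ_J = conv {e j : j ∈ J}` is contained in `⋃ j ∈ J, C j`, then `⋂ i, C i ≠ ∅`. -/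
theorem KKM_lemma (n : ℕ) (e : Fin n → (Fin n → ℝ)) (he : ∀ i, e i = Pi.single i 1)
    (C : Fin n → Set (Fin n → ℝ))
    (hclosed : ∀ i, IsClosed (C i))
    (hsub : ∀ i, C i ⊆ stdSimplex ℝ (Fin n))
    (hcover : ∀ J : Finset (Fin n), J.Nonempty →
      convexHull ℝ (e '' ↑J) ⊆ ⋃ j ∈ J, C j) :
    (⋂ i, C i).Nonempty :=
  KKM_lemma_general e C hclosed hcover
end

section
/- Sperner's lemma: given a simplicial subdivision of the unit simplex $\Delta \subseteq \mathbb{R}^n$ and a Sperner labeling of its vertices, some simplex of the subdivision is completely labeled, i.e., its $n$ vertices carry all $n$ distinct labels. -/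
open Finset

/-- `𝒮` is a simplicial subdivision of the unit simplex in `ℝ^n`: a finite collection of
`(n-1)`-simplices (each given by its `n` affinely independent vertices, lying in the unit
simplex) whose union is the unit simplex, and such that the intersection of any two of
them is empty or a common face. -/
def IsSubdivision (n : ℕ) (𝒮 : Finset (Finset (Fin n → ℝ))) : Prop :=
  (∀ S ∈ 𝒮, S.card = n ∧ AffineIndependent ℝ ((↑) : S → (Fin n → ℝ)) ∧
    (↑S : Set (Fin n → ℝ)) ⊆ stdSimplex ℝ (Fin n)) ∧
  (⋃ S ∈ 𝒮, convexHull ℝ (↑S : Set (Fin n → ℝ))) = stdSimplex ℝ (Fin n) ∧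
  (∀ S ∈ 𝒮, ∀ T ∈ 𝒮,
    convexHull ℝ (↑S : Set (Fin n → ℝ)) ∩ convexHull ℝ (↑T : Set (Fin n → ℝ)) = ∅ ∨
    ∃ F : Finset (Fin n → ℝ), F ⊆ S ∧ F ⊆ T ∧
      convexHull ℝ (↑S : Set (Fin n → ℝ)) ∩ convexHull ℝ (↑T : Set (Fin n → ℝ)) =
        convexHull ℝ (↑F : Set (Fin n → ℝ)))

/-- `ℓ` is a Sperner labeling of the vertices of the subdivision `𝒮`: each vertex `v`
gets a label `ℓ v` with `v (ℓ v) > 0`. -/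
def IsSpernerLabeling (n : ℕ) (𝒮 : Finset (Finset (Fin n → ℝ)))
    (ℓ : (Fin n → ℝ) → Fin n) : Prop :=
  ∀ S ∈ 𝒮, ∀ v ∈ S, 0 < v (ℓ v)

/-- A simplex `S` of the subdivision is completely labeled: its vertices carry all `n` labels. -/
def IsCompletelyLabeled (n : ℕ) (S : Finset (Fin n → ℝ))
    (ℓ : (Fin n → ℝ) → Fin n) : Prop :=
  ∀ i : Fin n, ∃ v ∈ S, ℓ v = i

/-! Let `g` be the map of the vertices with `g v = e_{ℓ v}`. Passing to the cones over the faces,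
`g` extends to a map `f` of the nonnegative orthant that is linear on each cone, say `f = A s` on
the cone over `s`, and the condition on the labels says that `f` maps every face of the simplex
into itself. For small `t > 0` the map `x + t (f x - x)` is therefore a bijection of the solid
simplex `D = {x ≥ 0, ∑ x_k ≤ 1}`, and comparing volumes gives
`∑ s, det (I + t (A s - I)) vol (cone s ∩ D) = vol D`. Both sides are polynomials in `t`, so the
identity persists at `t = 1`. Hence `det (A s) ≠ 0` for some face `s`, and then the vectors
`e_{ℓ v}` with `v ∈ s` span the whole space: every label occurs on `s`. -/

open MeasureTheory Topology

section LipschitzPieces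

lemma dist_le_of_lipschitzOnWith_finite_closed_cover {κ F : Type*} [Finite κ]
    [PseudoMetricSpace F] {K : NNReal} {φ : ℝ → F} {C : κ → Set ℝ} {a b : ℝ} (hab : a ≤ b)
    (hC : ∀ i, IsClosed (C i)) (hcover : Set.Icc a b ⊆ ⋃ i, C i)
    (hφ : ∀ i, LipschitzOnWith K φ (C i ∩ Set.Icc a b)) :
    dist (φ a) (φ b) ≤ K * (b - a) := by
  have hcont : ContinuousOn φ (Set.Icc a b) := by
    refine ((locallyFinite_of_finite _).continuousOn_iUnion
      (fun i ↦ (hC i).inter isClosed_Icc) fun i ↦ (hφ i).continuousOn).mono ?_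
    rw [← Set.iUnion_inter]
    exact Set.subset_inter hcover subset_rfl
  let good : Set ℝ := {u | dist (φ a) (φ u) ≤ K * (u - a)}
  have hgood : IsClosed (good ∩ Set.Icc a b) := by
    have hdist : ContinuousOn (fun u ↦ dist (φ a) (φ u)) (Set.Icc a b) := by fun_prop
    have hbound : ContinuousOn (fun u ↦ K * (u - a)) (Set.Icc a b) := by fun_prop
    rw [Set.inter_comm]
    exact isClosed_Icc.isClosed_le hdist hbound
  refine hgood.Icc_subset_of_forall_exists_gt (by simp [good]) ?_ ⟨hab, le_rfl⟩
  rintro u ⟨hu, hau, hub⟩ v huv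
  -- Points slightly to the right of `u` lie only in pieces that contain `u`.
  have hnear : ∀ᶠ w in 𝓝[>] u, ∀ i, w ∈ C i → u ∈ C i := by
    filter_upwards [nhdsWithin_le_nhds
      ((locallyFinite_of_finite C).iInter_compl_mem_nhds hC u)] with w hw i hwi
    by_contra hui
    exact Set.mem_iInter₂.1 hw i hui hwi
  obtain ⟨w, hw, huw, hwv⟩ := (hnear.and (Ioc_mem_nhdsGT (lt_min hub huv))).exists
  have hwIcc : w ∈ Set.Icc a b := ⟨hau.trans huw.le, hwv.trans (min_le_left _ _)⟩
  obtain ⟨i, hi⟩ := Set.mem_iUnion.1 (hcover hwIcc)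
  have hstep := (hφ i).dist_le_mul u ⟨hw i hi, hau, hub.le⟩ w ⟨hi, hwIcc⟩
  rw [dist_comm u, Real.dist_eq, abs_of_pos (sub_pos.2 huw)] at hstep
  refine ⟨w, ?_, huw, hwv.trans (min_le_right _ _)⟩
  calc dist (φ a) (φ w) ≤ dist (φ a) (φ u) + dist (φ u) (φ w) := dist_triangle ..
    _ ≤ K * (u - a) + K * (w - u) := add_le_add hu hstep
    _ = K * (w - a) := by ring

lemma lipschitzOnWith_of_finite_closed_cover {κ E F : Type*} [Finite κ]
    [SeminormedAddCommGroup E] [NormedSpace ℝ E] [PseudoMetricSpace F] {K : NNReal} {f : E → F}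
    {C : κ → Set E} {s : Set E} (hs : Convex ℝ s) (hC : ∀ i, IsClosed (C i))
    (hcover : s ⊆ ⋃ i, C i) (hf : ∀ i, LipschitzOnWith K f (C i ∩ s)) :
    LipschitzOnWith K f s := by
  refine LipschitzOnWith.of_dist_le_mul fun x hx y hy ↦ ?_
  let γ : ℝ → E := AffineMap.lineMap x y
  have hγs : ∀ u ∈ Set.Icc (0 : ℝ) 1, γ u ∈ s := fun u hu ↦ hs.lineMap_mem hx hy hu
  have hγ : LipschitzWith (nndist x y) γ := lipschitzWith_lineMap x y
  have h := dist_le_of_lipschitzOnWith_finite_closed_cover (φ := f ∘ γ) zero_le_one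
    (fun i ↦ (hC i).preimage hγ.continuous)
    (fun u hu ↦ by simpa using hcover (hγs u hu))
    fun i ↦ (hf i).comp hγ.lipschitzOnWith fun u hu ↦ ⟨hu.1, hγs u hu.2⟩
  simpa [γ] using h

end LipschitzPieces

section DetLineMap

open Polynomial

lemma exists_polynomial_eval_eq_det_lineMap {R M : Type*} [CommRing R] [AddCommGroup M]
    [Module R M] [Module.Free R M] [Module.Finite R M] (A B : M →ₗ[R] M) :
    ∃ p : R[X], ∀ t, p.eval t = LinearMap.det (AffineMap.lineMap A B t) := by
  classical
  let b := Module.Free.chooseBasis R M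
  let N := LinearMap.toMatrix b b
  refine ⟨((N A).map C + (X : R[X]) • (N (B - A)).map C).det, fun t ↦ ?_⟩
  rw [← LinearMap.det_toMatrix b, ← coe_evalRingHom, RingHom.map_det]
  congr 1
  ext i j
  simp [N, AffineMap.lineMap_apply, add_comm]

lemma eventually_det_lineMap_id_pos {V : Type*} [AddCommGroup V] [Module ℝ V]
    [FiniteDimensional ℝ V] (A : V →ₗ[ℝ] V) :
    ∀ᶠ t : ℝ in 𝓝 0, 0 < LinearMap.det (AffineMap.lineMap LinearMap.id A t) := by
  obtain ⟨p, hp⟩ := exists_polynomial_eval_eq_det_lineMap LinearMap.id A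
  simp only [← hp]
  exact p.continuous.continuousAt.eventually_const_lt (by simp [hp])

end DetLineMap

/-- `f` is piecewise linear on `s`: it agrees with the linear map `A i` on the `i`-th piece of
a family `C` of closed sets with union `s`. The pieces may overlap, and a finite family is asked
for by a `Finite κ` instance where it matters. -/
structure IsPiecewiseLinearOn {κ V W : Type*} [AddCommGroup V] [Module ℝ V] [TopologicalSpace V]
    [AddCommGroup W] [Module ℝ W] (f : V → W) (C : κ → Set V) (A : κ → V →ₗ[ℝ] W)
    (s : Set V) : Prop where
  isClosed : ∀ i, IsClosed (C i)
  iUnion_eq : ⋃ i, C i = s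
  eqOn : ∀ i, Set.EqOn f (A i) (C i)

namespace IsPiecewiseLinearOn

variable {κ V : Type*} [NormedAddCommGroup V] [NormedSpace ℝ V] {f : V → V} {C : κ → Set V}
  {A : κ → V →ₗ[ℝ] V} {s : Set V}

lemma lineMap_id (hf : IsPiecewiseLinearOn f C A s) (t : ℝ) :
    IsPiecewiseLinearOn (fun x ↦ AffineMap.lineMap x (f x) t) C
      (fun i ↦ AffineMap.lineMap LinearMap.id (A i) t) s where
  isClosed := hf.isClosed
  iUnion_eq := hf.iUnion_eq
  eqOn i x hx := by simp [AffineMap.lineMap_apply, hf.eqOn i hx]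

lemma exists_lipschitzOnWith [Finite κ] [FiniteDimensional ℝ V]
    (hf : IsPiecewiseLinearOn f C A s) (hs : Convex ℝ s) : ∃ K, LipschitzOnWith K f s := by
  have := Fintype.ofFinite κ
  let L : κ → NNReal := fun i ↦ ‖(A i).toContinuousLinearMap‖₊
  refine ⟨Finset.univ.sup L, lipschitzOnWith_of_finite_closed_cover hs hf.isClosed
    hf.iUnion_eq.ge fun i x hx y hy ↦ ?_⟩
  rw [hf.eqOn i hx.1, hf.eqOn i hy.1]
  exact (A i).toContinuousLinearMap.lipschitz.weaken
    (Finset.le_sup (f := L) (Finset.mem_univ i)) x y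

theorem addHaar_image [Fintype κ] [FiniteDimensional ℝ V] [MeasurableSpace V] [BorelSpace V]
    {μ : Measure V} [μ.IsAddHaarMeasure] {D : Set V} (hf : IsPiecewiseLinearOn f C A s)
    (hC : Pairwise (Function.onFun (AEDisjoint μ) C)) (hD : MeasurableSet D) (hDs : D ⊆ s)
    (hinj : Set.InjOn f D) :
    μ (f '' D) = ∑ i, ENNReal.ofReal |LinearMap.det (A i)| * μ (C i ∩ D) := by
  have himage : ∀ i, ∀ B ⊆ C i, f '' B = A i '' B := fun i B hB ↦
    Set.image_congr fun x hx ↦ hf.eqOn i (hB hx)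
  have hpiece : ∀ i, MeasurableSet (C i ∩ D) := fun i ↦ (hf.isClosed i).measurableSet.inter hD
  have hpieces : D = ⋃ i, C i ∩ D := by
    rw [← Set.iUnion_inter, hf.iUnion_eq, Set.inter_eq_right.2 hDs]
  conv_lhs => rw [hpieces, Set.image_iUnion]
  rw [measure_iUnion₀, tsum_fintype]
  · simp only [himage _ _ Set.inter_subset_left, Measure.addHaar_image_linearMap]
  · intro i j hij
    change μ (f '' (C i ∩ D) ∩ f '' (C j ∩ D)) = 0
    rw [← hinj.image_inter Set.inter_subset_right Set.inter_subset_right,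
      himage i _ (Set.inter_subset_left.trans Set.inter_subset_left),
      Measure.addHaar_image_linearMap,
      measure_mono_null (Set.inter_subset_inter Set.inter_subset_left Set.inter_subset_left)
        (hC hij), mul_zero]
  · refine fun i ↦ MeasurableSet.nullMeasurableSet ?_
    rw [himage i _ Set.inter_subset_left]
    refine (hpiece i).image_of_continuousOn_injOn
      (A i).continuous_of_finiteDimensional.continuousOn ?_
    exact ((hf.eqOn i).mono Set.inter_subset_left).injOn_iff.1
      (hinj.mono Set.inter_subset_right)

lemma sum_abs_det_mul_addHaar_real [Fintype κ] [FiniteDimensional ℝ V] [MeasurableSpace V]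
    [BorelSpace V] {μ : Measure V} [μ.IsAddHaarMeasure] {D : Set V}
    (hf : IsPiecewiseLinearOn f C A s) (hC : Pairwise (Function.onFun (AEDisjoint μ) C))
    (hD : IsCompact D) (hDs : D ⊆ s) (hbij : Set.BijOn f D D) :
    ∑ i, |LinearMap.det (A i)| * μ.real (C i ∩ D) = μ.real D := by
  have h := hf.addHaar_image hC hD.measurableSet hDs hbij.injOn
  rw [hbij.image_eq] at h
  rw [measureReal_def, h, ENNReal.toReal_sum]
  · simp [measureReal_def, abs_nonneg]
  · exact fun i _ ↦ ENNReal.mul_ne_top ENNReal.ofReal_ne_top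
      ((measure_mono Set.inter_subset_right).trans_lt hD.measure_lt_top).ne

end IsPiecewiseLinearOn

section Carrier

variable {ι : Type*} [Fintype ι]

/-- The carrier of a point `x` of the nonnegative orthant: the smallest face containing `x` of the
dilated standard simplex through `x`. -/
def carrier (x : ι → ℝ) : Set (ι → ℝ) :=
  {y | 0 ≤ y ∧ ∑ k, y k = ∑ k, x k ∧ ∀ k, x k = 0 → y k = 0}

lemma self_mem_carrier {x : ι → ℝ} (hx : 0 ≤ x) : x ∈ carrier x :=
  ⟨hx, rfl, fun _ ↦ id⟩

lemma add_mem_carrier {x x' y y' : ι → ℝ} (hx : 0 ≤ x) (hx' : 0 ≤ x') (hy : y ∈ carrier x)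
    (hy' : y' ∈ carrier x') : y + y' ∈ carrier (x + x') := by
  refine ⟨add_nonneg hy.1 hy'.1, ?_, fun k hk ↦ ?_⟩
  · simp [Finset.sum_add_distrib, hy.2.1, hy'.2.1]
  · obtain ⟨hk, hk'⟩ := (add_eq_zero_iff_of_nonneg (hx k) (hx' k)).1 hk
    simp [hy.2.2 k hk, hy'.2.2 k hk']

lemma smul_mem_carrier {x y : ι → ℝ} {c : ℝ} (hc : 0 ≤ c) (hy : y ∈ carrier x) :
    c • y ∈ carrier (c • x) := by
  refine ⟨smul_nonneg hc hy.1, ?_, fun k hk ↦ ?_⟩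
  · simp [← Finset.mul_sum, hy.2.1]
  · rcases mul_eq_zero.1 hk with rfl | hk
    · simp
    · simp [hy.2.2 k hk]

lemma convex_carrier (x : ι → ℝ) : Convex ℝ (carrier x) := by
  rintro y hy z hz a b ha hb hab
  refine ⟨add_nonneg (smul_nonneg ha hy.1) (smul_nonneg hb hz.1), ?_, fun k hk ↦ ?_⟩
  · simp [Finset.sum_add_distrib, ← Finset.mul_sum, hy.2.1, hz.2.1, ← add_mul, hab]
  · simp [hy.2.2 k hk, hz.2.2 k hk]

lemma single_one_mem_carrier [DecidableEq ι] {x : ι → ℝ} (hx : x ∈ stdSimplex ℝ ι) {k : ι}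
    (hk : 0 < x k) : Pi.single k 1 ∈ carrier x := by
  refine ⟨Pi.single_nonneg.2 zero_le_one, by simp [hx.2], fun j hj ↦ ?_⟩
  exact Pi.single_eq_of_ne (by rintro rfl; exact hk.ne' hj) 1

variable (ι) in
/-- The solid simplex under the standard simplex: the points of the nonnegative orthant with
coordinate sum at most `1`. Unlike the standard simplex, it has nonempty interior. -/
def solidSimplex : Set (ι → ℝ) := {x | 0 ≤ x ∧ ∑ k, x k ≤ 1}

lemma solidSimplex_subset_Icc : solidSimplex ι ⊆ Set.Icc 0 1 := fun _ hx ↦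
  ⟨hx.1, fun k ↦ (Finset.single_le_sum (fun j _ ↦ hx.1 j) (Finset.mem_univ k)).trans hx.2⟩

lemma isCompact_solidSimplex : IsCompact (solidSimplex ι) :=
  have hclosed : IsClosed {x : ι → ℝ | ∑ k, x k ≤ 1} := isClosed_le (by fun_prop) (by fun_prop)
  isCompact_Icc.of_isClosed_subset (isClosed_Ici.inter hclosed) solidSimplex_subset_Icc

lemma volume_real_solidSimplex_pos : 0 < volume.real (solidSimplex ι) := by
  let c : ℝ := (Fintype.card ι + 1 : ℝ)⁻¹
  have hc : 0 < c := by positivity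
  have hsub : Set.Icc 0 (fun _ ↦ c) ⊆ solidSimplex ι := fun x hx ↦ by
    refine ⟨hx.1, (Finset.sum_le_sum fun k _ ↦ hx.2 k).trans ?_⟩
    simp only [Finset.sum_const, Finset.card_univ, nsmul_eq_mul, c, ← div_eq_mul_inv]
    exact div_le_one_of_le₀ (by linarith) (by positivity)
  calc 0 < volume.real (Set.Icc (0 : ι → ℝ) fun _ ↦ c) := by
        have hle : (0 : ι → ℝ) ≤ fun _ ↦ c := fun _ ↦ hc.le
        rw [measureReal_def, Real.volume_Icc_pi_toReal hle]
        exact Finset.prod_pos fun _ _ ↦ by simpa using hc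
    _ ≤ volume.real (solidSimplex ι) := measureReal_mono hsub
        isCompact_solidSimplex.measure_lt_top.ne

variable {f : (ι → ℝ) → ι → ℝ}

lemma mem_solidSimplex_iff_of_mem_carrier {x y : ι → ℝ} (hx : 0 ≤ x) (hy : y ∈ carrier x) :
    y ∈ solidSimplex ι ↔ x ∈ solidSimplex ι := by
  simp [solidSimplex, hx, hy.1, hy.2.1]

lemma lipschitzWith_posPart_pi : LipschitzWith 1 fun x : ι → ℝ ↦ x⁺ := by
  refine LipschitzWith.of_dist_le_mul fun x y ↦ ?_
  rw [NNReal.coe_one, one_mul]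
  refine (dist_pi_le_iff dist_nonneg).2 fun k ↦ ?_
  calc dist (x k)⁺ (y k)⁺ ≤ dist (x k) (y k) := by
        simpa using lipschitzWith_posPart.dist_le_mul (x k) (y k)
    _ ≤ dist x y := dist_le_pi_dist x y k

lemma bijective_of_lipschitzWith_sub_id {E : Type*} [NormedAddCommGroup E] [NormedSpace ℝ E]
    [CompleteSpace E] {K : NNReal} (hK : K < 1) {h : E → E}
    (hh : LipschitzWith K fun x ↦ h x - x) : Function.Bijective h := by
  have happrox : ApproximatesLinearOn h
      (ContinuousLinearEquiv.refl ℝ E : E →L[ℝ] E) Set.univ K := fun x _ y _ ↦ by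
    simpa [dist_eq_norm, sub_sub_sub_comm] using hh.dist_le_mul x y
  have hsmall : Subsingleton E ∨
      K < ‖((ContinuousLinearEquiv.refl ℝ E).symm : E →L[ℝ] E)‖₊⁻¹ := by
    rcases subsingleton_or_nontrivial E with hE | hE
    · exact .inl hE
    · exact .inr (by simpa using hK)
  exact ⟨Set.injOn_univ.1 (happrox.injOn hsmall), happrox.surjective hsmall⟩

/- Extending the displacement `h x - x` to the whole space by composing it with `x ↦ x⁺` gives a
small perturbation of the identity, hence a bijection. A point with a negative coordinate keeps
that coordinate, because its positive part lies in a coordinate hyperplane preserved by `h`. -/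
lemma bijOn_solidSimplex_of_lipschitzOnWith_sub_id {K : NNReal} (hK : K < 1)
    {h : (ι → ℝ) → ι → ℝ} (hcarrier : ∀ x, 0 ≤ x → h x ∈ carrier x)
    (hh : LipschitzOnWith K (fun x ↦ h x - x) (Set.Ici 0)) :
    Set.BijOn h (solidSimplex ι) (solidSimplex ι) := by
  let H : (ι → ℝ) → ι → ℝ := fun x ↦ x + (h x⁺ - x⁺)
  have hH : ∀ x, 0 ≤ x → H x = h x := fun x hx ↦ by simp [H, posPart_eq_self.2 hx]
  have hbij : Function.Bijective H := by
    refine bijective_of_lipschitzWith_sub_id hK ?_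
    have hcomp := hh.comp lipschitzWith_posPart_pi.lipschitzOnWith
      fun x (_ : x ∈ Set.univ) ↦ posPart_nonneg x
    simpa [H, Function.comp_def] using hcomp
  have hnonneg : ∀ x, 0 ≤ H x → 0 ≤ x := fun x hx k ↦ by
    by_contra! hk
    have hk' : x⁺ k = 0 := by
      rw [Pi.posPart_apply]
      exact posPart_eq_zero.2 hk.le
    have hHk : H x k = x k := by
      simp [H, hk', (hcarrier _ (posPart_nonneg x)).2.2 k hk']
    exact (hx k).not_gt (hHk.trans_lt hk)
  have hEqOn : Set.EqOn H h (solidSimplex ι) := fun x hx ↦ hH x hx.1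
  refine Set.BijOn.congr ⟨fun x hx ↦ ?_, hbij.1.injOn, fun y hy ↦ ?_⟩ hEqOn
  · rw [hEqOn hx]
    exact (mem_solidSimplex_iff_of_mem_carrier hx.1 (hcarrier x hx.1)).2 hx
  · obtain ⟨x, rfl⟩ := hbij.2 y
    have hx := hnonneg x hy.1
    rw [hH x hx] at hy
    exact ⟨x, (mem_solidSimplex_iff_of_mem_carrier hx (hcarrier x hx)).1 hy, rfl⟩

lemma eventually_bijOn_solidSimplex_lineMap {K : NNReal} (hf : LipschitzOnWith K f (Set.Ici 0))
    (hcarrier : ∀ x, 0 ≤ x → f x ∈ carrier x) :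
    ∀ᶠ t : ℝ in 𝓝[>] 0, Set.BijOn (fun x ↦ AffineMap.lineMap x (f x) t)
      (solidSimplex ι) (solidSimplex ι) := by
  have hsmall : ∀ᶠ t : ℝ in 𝓝[>] 0, ‖t‖₊ * (K + 1) < 1 := by
    have hcont : Continuous fun t : ℝ ↦ ‖t‖₊ * (K + 1) := by fun_prop
    exact (hcont.continuousAt.eventually_lt_const (by simp)).filter_mono nhdsWithin_le_nhds
  filter_upwards [hsmall, Ioc_mem_nhdsGT one_pos] with t hsmall ht
  refine bijOn_solidSimplex_of_lipschitzOnWith_sub_id hsmall (fun x hx ↦ ?_) ?_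
  · exact (convex_carrier x).lineMap_mem (self_mem_carrier hx) (hcarrier x hx) ⟨ht.1.le, ht.2⟩
  · have hdisp : LipschitzOnWith (K + 1) (fun x ↦ f x - x) (Set.Ici 0) :=
      hf.sub LipschitzWith.id.lipschitzOnWith
    simpa [AffineMap.lineMap_apply, Function.comp_def] using
      (lipschitzWith_smul t).comp_lipschitzOnWith hdisp

variable {κ : Type*} {C : κ → Set (ι → ℝ)} {A : κ → (ι → ℝ) →ₗ[ℝ] (ι → ℝ)}

/- For small `t > 0` the map `x + t (f x - x)` permutes the solid simplex, so comparing volumes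
gives the identity for its linear pieces. Both sides are polynomials in `t`; evaluate at `1`. -/
theorem sum_det_mul_volume_solidSimplex [Fintype κ]
    (hf : IsPiecewiseLinearOn f C A (Set.Ici 0))
    (hC : Pairwise (Function.onFun (AEDisjoint volume) C))
    (hcarrier : ∀ x, 0 ≤ x → f x ∈ carrier x) :
    ∑ i, LinearMap.det (A i) * volume.real (C i ∩ solidSimplex ι) =
      volume.real (solidSimplex ι) := by
  obtain ⟨K, hK⟩ := hf.exists_lipschitzOnWith (convex_Ici 0)
  choose p hp using fun i ↦ exists_polynomial_eval_eq_det_lineMap LinearMap.id (A i)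
  let P : Polynomial ℝ := ∑ i, p i * Polynomial.C (volume.real (C i ∩ solidSimplex ι))
  have hP : ∀ t, P.eval t = ∑ i, LinearMap.det (AffineMap.lineMap LinearMap.id (A i) t) *
      volume.real (C i ∩ solidSimplex ι) := fun t ↦ by simp [P, Polynomial.eval_finsetSum, hp]
  have hsmall : ∀ᶠ t in 𝓝[>] 0, P.eval t = volume.real (solidSimplex ι) := by
    filter_upwards [eventually_bijOn_solidSimplex_lineMap hK hcarrier,
      (Filter.eventually_all.2 fun i ↦ eventually_det_lineMap_id_pos (A i)).filter_mono
        nhdsWithin_le_nhds] with t hbij hdet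
    rw [hP, ← (hf.lineMap_id t).sum_abs_det_mul_addHaar_real hC isCompact_solidSimplex
      (fun x hx ↦ hx.1) hbij]
    simp only [abs_of_pos (hdet _)]
  have hconst : P = Polynomial.C (volume.real (solidSimplex ι)) := by
    obtain ⟨u, hu, hsub⟩ := mem_nhdsGT_iff_exists_Ioo_subset.1 hsmall
    exact P.eq_of_infinite_eval_eq _
      ((Set.Ioo_infinite hu).mono fun t ht ↦ by simpa using hsub ht)
  simpa [hconst] using (hP 1).symm

theorem exists_det_ne_zero_of_mem_carrier [Finite κ]
    (hf : IsPiecewiseLinearOn f C A (Set.Ici 0))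
    (hC : Pairwise (Function.onFun (AEDisjoint volume) C))
    (hcarrier : ∀ x, 0 ≤ x → f x ∈ carrier x) : ∃ i, LinearMap.det (A i) ≠ 0 := by
  have := Fintype.ofFinite κ
  by_contra! hdet
  have h := sum_det_mul_volume_solidSimplex hf hC hcarrier
  simp only [hdet, zero_mul, Finset.sum_const_zero] at h
  exact volume_real_solidSimplex_pos.ne h

end Carrier

section PointedConeHull

open Pointwise

lemma linearIndepOn_of_affineIndependent_of_apply_eq_one {k V : Type*} [Field k] [AddCommGroup V]
    [Module k V] {s : Set V} (hs : AffineIndependent k ((↑) : s → V)) (φ : V →ₗ[k] k)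
    (hφ : ∀ x ∈ s, φ x = 1) : LinearIndepOn k id s := by
  refine linearIndependent_iff'.2 fun u w hw ↦ (affineIndependent_iff (k := k)).1 hs u w ?_ hw
  simpa [hφ] using congrArg φ hw

lemma span_ne_top_of_ssubset_of_linearIndepOn {k V : Type*} [Ring k] [Nontrivial k]
    [AddCommGroup V] [Module k V] {s t : Set V} (hs : LinearIndepOn k id s) (hts : t ⊂ s) :
    Submodule.span k t ≠ ⊤ := by
  obtain ⟨x, hxs, hxt⟩ := Set.exists_of_ssubset hts
  have hsub : t ⊆ id '' (s \ {x}) := by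
    simpa using Set.subset_sdiff_singleton hts.subset hxt
  exact fun htop ↦ hs.notMem_span hxs (Submodule.span_mono hsub (htop ▸ Submodule.mem_top))

lemma exists_linearMap_eqOn_range_le_span {k V W : Type*} [DivisionRing k] [AddCommGroup V]
    [Module k V] [AddCommGroup W] [Module k W] {s : Set V} (hs : LinearIndepOn k id s)
    (f : V → W) :
    ∃ A : V →ₗ[k] W, Set.EqOn A f s ∧ LinearMap.range A ≤ Submodule.span k (f '' s) := by
  classical
  let b := Module.Basis.extend hs
  refine ⟨b.constr ℕ fun v ↦ if (v : V) ∈ s then f v else 0, fun v hv ↦ ?_, ?_⟩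
  · let v' : hs.extend (Set.subset_univ s) := ⟨v, hs.subset_extend _ hv⟩
    have hv' : b v' = v := Module.Basis.extend_apply_self hs v'
    rw [← hv', Module.Basis.constr_basis]
    simp [v', hv', hv]
  · rw [Module.Basis.constr_range, Submodule.span_le]
    rintro _ ⟨v, rfl⟩
    by_cases hv : (v : V) ∈ s
    · simpa [hv] using Submodule.subset_span (Set.mem_image_of_mem f hv)
    · simp [hv]

variable {E : Type*} [AddCommGroup E] [Module ℝ E]

lemma mem_pointedConeHull_iff {s : Set E} {x : E} :
    x ∈ PointedCone.hull ℝ s ↔ x = 0 ∨ ∃ r : ℝ, 0 < r ∧ ∃ y ∈ convexHull ℝ s, r • y = x := by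
  constructor
  · intro hx
    induction hx using Submodule.span_induction with
    | mem x hx => exact .inr ⟨1, one_pos, x, subset_convexHull ℝ s hx, one_smul ..⟩
    | zero => exact .inl rfl
    | add x y _ _ hx hy =>
      obtain rfl | ⟨r, hr, x, hx, rfl⟩ := hx
      · simpa using hy
      obtain rfl | ⟨r', hr', y, hy, rfl⟩ := hy
      · exact .inr ⟨r, hr, x, hx, by simp⟩
      have hmem : r • x + r' • y ∈ (r + r') • convexHull ℝ s := by
        rw [(convex_convexHull ℝ s).add_smul hr.le hr'.le]
        exact Set.add_mem_add (Set.smul_mem_smul_set hx) (Set.smul_mem_smul_set hy)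
      exact .inr ⟨r + r', add_pos hr hr', hmem⟩
    | smul c x _ hx =>
      obtain rfl | ⟨r, hr, x, hx, rfl⟩ := hx
      · simp
      obtain hc | hc := c.2.eq_or_lt
      · exact .inl (by simp [Subtype.ext_iff, ← hc])
      · exact .inr ⟨c * r, mul_pos hc hr, x, hx, mul_smul ..⟩
  · rintro (rfl | ⟨r, hr, y, hy, rfl⟩)
    · exact zero_mem _
    · exact PointedCone.smul_mem _ hr.le
        (convexHull_min PointedCone.subset_hull (PointedCone.convex _) hy)

lemma isClosed_pointedConeHull_range [TopologicalSpace E] [IsTopologicalAddGroup E]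
    [ContinuousSMul ℝ E] [T2Space E] {κ : Type*} [Finite κ] {v : κ → E}
    (hv : LinearIndependent ℝ v) : IsClosed (PointedCone.hull ℝ (Set.range v) : Set E) := by
  have := Fintype.ofFinite κ
  let L : (κ → ℝ) →ₗ[ℝ] E := Fintype.linearCombination ℝ v
  have hL : IsClosedEmbedding L := LinearMap.isClosedEmbedding_of_injective
    (LinearMap.ker_eq_bot.2 hv.fintypeLinearCombination_injective)
  have himage : (PointedCone.hull ℝ (Set.range v) : Set E) = L '' Set.Ici 0 := by
    ext x
    rw [SetLike.mem_coe, Submodule.mem_span_range_iff_exists_fun]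
    constructor
    · rintro ⟨c, rfl⟩
      exact ⟨fun i ↦ c i, fun i ↦ (c i).2, rfl⟩
    · rintro ⟨c, hc, rfl⟩
      exact ⟨fun i ↦ ⟨c i, hc i⟩, rfl⟩
  rw [himage]
  exact hL.isClosedMap _ isClosed_Ici

lemma pointedConeHull_inter_subset {s t : Set E} (φ : E →ₗ[ℝ] ℝ) (hs : ∀ x ∈ s, φ x = 1)
    (ht : ∀ x ∈ t, φ x = 1)
    (hst : convexHull ℝ s ∩ convexHull ℝ t ⊆ convexHull ℝ (s ∩ t)) :
    (PointedCone.hull ℝ s ∩ PointedCone.hull ℝ t : Set E) ⊆ PointedCone.hull ℝ (s ∩ t) := by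
  have hφ : ∀ {u : Set E}, (∀ x ∈ u, φ x = 1) → ∀ y ∈ convexHull ℝ u, φ y = 1 := fun hu _ hy ↦
    convexHull_min hu (convex_hyperplane φ.isLinear 1) hy
  rintro x ⟨hxs, hxt⟩
  rw [SetLike.mem_coe, mem_pointedConeHull_iff] at hxs hxt ⊢
  obtain rfl | ⟨r, hr, y, hy, rfl⟩ := hxs
  · exact .inl rfl
  obtain hzero | ⟨r', hr', y', hy', heq⟩ := hxt
  · exact .inl hzero
  have hrr' : r' = r := by simpa [hφ hs y hy, hφ ht y' hy'] using congrArg φ heq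
  subst hrr'
  obtain rfl : y' = y := smul_right_injective E hr'.ne' heq
  exact .inr ⟨r', hr, y', hst ⟨hy, hy'⟩, rfl⟩

lemma nonneg_of_mem_pointedConeHull [PartialOrder E] [IsOrderedAddMonoid E]
    [PosSMulMono ℝ E] {s : Set E} (hs : ∀ v ∈ s, 0 ≤ v) {x : E}
    (hx : x ∈ PointedCone.hull ℝ s) : 0 ≤ x := by
  have hle : PointedCone.hull ℝ s ≤ PointedCone.positive ℝ E := Submodule.span_le.2 hs
  exact hle hx

end PointedConeHull

lemma apply_mem_carrier_of_mem_pointedConeHull {ι : Type*} [Fintype ι]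
    {A : (ι → ℝ) →ₗ[ℝ] ι → ℝ} {s : Set (ι → ℝ)} (hs : ∀ v ∈ s, 0 ≤ v)
    (hA : ∀ v ∈ s, A v ∈ carrier v) {x : ι → ℝ} (hx : x ∈ PointedCone.hull ℝ s) :
    A x ∈ carrier x := by
  induction hx using Submodule.span_induction with
  | mem v hv => exact hA v hv
  | zero => simpa using self_mem_carrier le_rfl
  | add x y hx hy hAx hAy =>
    rw [map_add]
    exact add_mem_carrier (nonneg_of_mem_pointedConeHull hs hx)
      (nonneg_of_mem_pointedConeHull hs hy) hAx hAy
  | smul c x _ hAx => exact map_smul A (c : ℝ) x ▸ smul_mem_carrier c.2 hAx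

lemma exists_forall_eqOn_of_eqOn_inter {κ α β : Type*} [Nonempty β] {C : κ → Set α}
    {A : κ → α → β} (hA : ∀ i j, Set.EqOn (A i) (A j) (C i ∩ C j)) :
    ∃ f : α → β, ∀ i, Set.EqOn f (A i) (C i) := by
  classical
  refine ⟨fun x ↦ if h : ∃ i, x ∈ C i then A h.choose x else Classical.arbitrary β,
    fun i x hx ↦ ?_⟩
  have h : ∃ i, x ∈ C i := ⟨i, hx⟩
  simpa [h] using hA h.choose i ⟨h.choose_spec, hx⟩

section SimplicialComplex

open Geometry

variable {ι : Type*} [Fintype ι]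

lemma exists_mem_stdSimplex_sum_smul_eq [Nonempty ι] {x : ι → ℝ} (hx : 0 ≤ x) :
    ∃ y ∈ stdSimplex ℝ ι, (∑ k, x k) • y = x := by
  classical
  have hsum : 0 ≤ ∑ k, x k := Finset.sum_nonneg fun k _ ↦ hx k
  obtain hzero | hpos := hsum.eq_or_lt
  · have hx0 : x = 0 := (Fintype.sum_eq_zero_iff_of_nonneg hx).1 hzero.symm
    exact ⟨_, single_mem_stdSimplex ℝ (Classical.arbitrary ι), by simp [hx0]⟩
  · exact ⟨(∑ k, x k)⁻¹ • x, ⟨fun k ↦ mul_nonneg (inv_nonneg.2 hsum) (hx k), by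
      simp [← Finset.mul_sum, hpos.ne']⟩, smul_inv_smul₀ hpos.ne' x⟩

/-- The cone over a face `s` of a simplicial complex: the union of the rays from the origin through
the points of the face. -/
def faceCone {E : Type*} [AddCommGroup E] [Module ℝ E] (K : SimplicialComplex ℝ E)
    (s : K.faces) : Set E :=
  PointedCone.hull ℝ (s : Set E)

variable {K : SimplicialComplex ℝ (ι → ℝ)}

lemma sum_eq_one_of_mem_face (hK : K.space ⊆ stdSimplex ℝ ι) (s : K.faces) :
    ∀ v ∈ (s : Set (ι → ℝ)), (∑ k, LinearMap.proj k : (ι → ℝ) →ₗ[ℝ] ℝ) v = 1 := fun v hv ↦ by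
  simpa using (hK (K.subset_space s.2 hv)).2

lemma linearIndepOn_face (hK : K.space ⊆ stdSimplex ℝ ι) (s : K.faces) :
    LinearIndepOn ℝ id (s : Set (ι → ℝ)) :=
  linearIndepOn_of_affineIndependent_of_apply_eq_one (K.indep s.2) _ (sum_eq_one_of_mem_face hK s)

lemma isClosed_faceCone (hK : K.space ⊆ stdSimplex ℝ ι) (s : K.faces) :
    IsClosed (faceCone K s) := by
  simpa [faceCone] using isClosed_pointedConeHull_range (linearIndepOn_face hK s)

lemma faceCone_inter_subset_span (hK : K.space ⊆ stdSimplex ℝ ι) (s t : K.faces) :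
    faceCone K s ∩ faceCone K t ⊆ Submodule.span ℝ (s ∩ t : Set (ι → ℝ)) :=
  (pointedConeHull_inter_subset _ (sum_eq_one_of_mem_face hK s) (sum_eq_one_of_mem_face hK t)
    (K.inter_subset_convexHull s.2 t.2)).trans (PointedCone.hull_le_span ℝ _)

lemma pairwise_aedisjoint_faceCone (hK : K.space ⊆ stdSimplex ℝ ι) :
    Pairwise (Function.onFun (AEDisjoint volume) (faceCone K)) := by
  intro s t hst
  have hne : (s : Set (ι → ℝ)) ≠ t := by simpa [Subtype.ext_iff] using hst
  have hproper : Submodule.span ℝ (s ∩ t : Set (ι → ℝ)) ≠ ⊤ := by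
    by_cases hsub : (s : Set (ι → ℝ)) ⊆ t
    · rw [Set.inter_eq_left.2 hsub]
      exact span_ne_top_of_ssubset_of_linearIndepOn (linearIndepOn_face hK t)
        (hsub.ssubset_of_ne hne)
    · exact span_ne_top_of_ssubset_of_linearIndepOn (linearIndepOn_face hK s)
        (Set.inter_ssubset_left_iff.2 hsub)
  exact measure_mono_null (faceCone_inter_subset_span hK s t)
    (Measure.addHaar_submodule _ _ hproper)

lemma iUnion_faceCone [Nonempty ι] (hK : K.space = stdSimplex ℝ ι) :
    ⋃ s, faceCone K s = Set.Ici 0 := by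
  refine (Set.iUnion_subset fun s ↦ ?_).antisymm fun x hx ↦ ?_
  · exact fun x ↦ nonneg_of_mem_pointedConeHull fun v hv ↦ (hK.le (K.subset_space s.2 hv)).1
  · obtain ⟨y, hy, hxy⟩ := exists_mem_stdSimplex_sum_smul_eq hx
    rw [← hK] at hy
    obtain ⟨s, hs, hys⟩ := K.mem_space_iff.1 hy
    refine Set.mem_iUnion.2 ⟨⟨s, hs⟩, ?_⟩
    rw [← hxy]
    exact PointedCone.smul_mem _ (Finset.sum_nonneg fun k _ ↦ hx k) (convexHull_min
      PointedCone.subset_hull (PointedCone.convex _) hys)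

lemma exists_isPiecewiseLinearOn_faceCone [Nonempty ι] {W : Type*} [AddCommGroup W]
    [Module ℝ W] (hK : K.space = stdSimplex ℝ ι) (g : (ι → ℝ) → W) :
    ∃ (f : (ι → ℝ) → W) (A : K.faces → (ι → ℝ) →ₗ[ℝ] W),
      IsPiecewiseLinearOn f (faceCone K) A (Set.Ici 0) ∧
      ∀ s : K.faces, Set.EqOn (A s) g s ∧
        LinearMap.range (A s) ≤ Submodule.span ℝ (g '' (s : Set (ι → ℝ))) := by
  choose A hAg hrange using fun s : K.faces ↦
    exists_linearMap_eqOn_range_le_span (linearIndepOn_face hK.le s) g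
  obtain ⟨f, hf⟩ := exists_forall_eqOn_of_eqOn_inter (A := fun s ↦ A s)
    (C := faceCone K) fun s t x hx ↦ by
      have hagree : Set.EqOn (A s) (A t) (s ∩ t : Set (ι → ℝ)) := fun v hv ↦
        (hAg s hv.1).trans (hAg t hv.2).symm
      exact LinearMap.eqOn_span hagree (faceCone_inter_subset_span hK.le s t hx)
  exact ⟨f, A, ⟨isClosed_faceCone hK.le, iUnion_faceCone hK, hf⟩, fun s ↦ ⟨hAg s, hrange s⟩⟩

theorem exists_face_span_image_eq_top [Nonempty ι] (hfin : K.faces.Finite)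
    (hK : K.space = stdSimplex ℝ ι) {g : (ι → ℝ) → ι → ℝ}
    (hg : ∀ v ∈ K.vertices, g v ∈ carrier v) :
    ∃ s ∈ K.faces, Submodule.span ℝ (g '' (s : Set (ι → ℝ))) = ⊤ := by
  have := hfin.to_subtype
  obtain ⟨f, A, hf, hA⟩ := exists_isPiecewiseLinearOn_faceCone hK g
  have hcarrier : ∀ x, 0 ≤ x → f x ∈ carrier x := fun x hx ↦ by
    obtain ⟨s, hxs⟩ := Set.mem_iUnion.1 (hf.iUnion_eq.ge hx)
    rw [hf.eqOn s hxs]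
    refine apply_mem_carrier_of_mem_pointedConeHull (fun v hv ↦ ?_) (fun v hv ↦ ?_) hxs
    · exact (hK.le (K.subset_space s.2 hv)).1
    · rw [(hA s).1 hv]
      exact hg v (K.vertices_eq ▸ Set.mem_biUnion s.2 hv)
  obtain ⟨s, hdet⟩ := exists_det_ne_zero_of_mem_carrier hf (pairwise_aedisjoint_faceCone hK.le)
    hcarrier
  have hsurj : LinearMap.range (A s) = ⊤ :=
    LinearMap.range_eq_top.2 (LinearMap.equivOfDetNeZero (A s) hdet).surjective
  exact ⟨s, s.2, top_le_iff.1 (hsurj ▸ (hA s).2)⟩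

theorem sperner_lemma_general (hfin : K.faces.Finite) (hK : K.space = stdSimplex ℝ ι)
    {ℓ : (ι → ℝ) → ι} (hℓ : ∀ v ∈ K.vertices, 0 < v (ℓ v)) :
    ∃ s ∈ K.faces, ∀ i, ∃ v ∈ s, ℓ v = i := by
  classical
  have : Nonempty ι := ⟨ℓ 0⟩
  obtain ⟨s, hs, htop⟩ := exists_face_span_image_eq_top (g := fun v ↦ Pi.single (ℓ v) 1) hfin hK
    fun v hv ↦ single_one_mem_carrier (hK.le (K.vertices_subset_space hv)) (hℓ v hv)
  refine ⟨s, hs, fun i ↦ ?_⟩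
  by_contra! hi
  have hker : (⊤ : Submodule ℝ (ι → ℝ)) ≤ LinearMap.ker (LinearMap.proj i) := by
    rw [← htop, Submodule.span_le]
    rintro _ ⟨v, hv, rfl⟩
    exact Pi.single_eq_of_ne (hi v hv).symm 1
  simpa using hker (Submodule.mem_top (x := Pi.single i 1))

end SimplicialComplex

namespace IsSubdivision

open Geometry

variable {n : ℕ} {𝒮 : Finset (Finset (Fin n → ℝ))}

lemma convexHull_inter_subset (h𝒮 : IsSubdivision n 𝒮) {S T s t : Finset (Fin n → ℝ)}
    (hS : S ∈ 𝒮) (hT : T ∈ 𝒮) (hs : s ⊆ S) (ht : t ⊆ T) :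
    convexHull ℝ (s : Set (Fin n → ℝ)) ∩ convexHull ℝ (t : Set (Fin n → ℝ)) ⊆
      convexHull ℝ (s ∩ t : Set (Fin n → ℝ)) := by
  rintro x ⟨hxs, hxt⟩
  have hxST := Set.mem_inter (convexHull_mono (Finset.coe_subset.2 hs) hxs)
    (convexHull_mono (Finset.coe_subset.2 ht) hxt)
  obtain hempty | ⟨F, hFS, hFT, hF⟩ := h𝒮.2.2 S hS T hT
  · exact absurd (hempty ▸ hxST) (Set.notMem_empty x)
  · have hxsF : x ∈ convexHull ℝ (s ∩ F : Set (Fin n → ℝ)) := by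
      rw [(h𝒮.1 S hS).2.1.convexHull_inter hs hFS, ← hF]
      exact ⟨hxs, hxST⟩
    have hxsFt : x ∈ convexHull ℝ (s ∩ F ∩ t : Set (Fin n → ℝ)) := by
      have hinter := (h𝒮.1 T hT).2.1.convexHull_inter
        (Finset.inter_subset_right.trans hFT : s ∩ F ⊆ T) ht
      rw [Finset.coe_inter] at hinter
      rw [hinter]
      exact ⟨hxsF, hxt⟩
    exact convexHull_mono (Set.inter_subset_inter_left _ Set.inter_subset_left) hxsFt

/-- The simplicial complex of all nonempty faces of the simplices of a subdivision. -/
def toSimplicialComplex (h𝒮 : IsSubdivision n 𝒮) : SimplicialComplex ℝ (Fin n → ℝ) :=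
  .ofErase {s | ∃ S ∈ 𝒮, s ⊆ S}
    (fun _ ⟨S, hS, hs⟩ ↦ (h𝒮.1 S hS).2.1.mono (Finset.coe_subset.2 hs))
    (fun _ _ hts ⟨S, hS, hs⟩ ↦ ⟨S, hS, hts.trans hs⟩)
    fun _ ⟨_, hS, hs⟩ _ ⟨_, hT, ht⟩ ↦ h𝒮.convexHull_inter_subset hS hT hs ht

lemma exists_subset_of_mem_faces (h𝒮 : IsSubdivision n 𝒮) {s : Finset (Fin n → ℝ)}
    (hs : s ∈ h𝒮.toSimplicialComplex.faces) : ∃ S ∈ 𝒮, s ⊆ S := hs.1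

lemma finite_faces (h𝒮 : IsSubdivision n 𝒮) : h𝒮.toSimplicialComplex.faces.Finite := by
  classical
  refine (𝒮.biUnion Finset.powerset).finite_toSet.subset fun s hs ↦ ?_
  simpa using h𝒮.exists_subset_of_mem_faces hs

lemma space_eq (h𝒮 : IsSubdivision n 𝒮) :
    h𝒮.toSimplicialComplex.space = stdSimplex ℝ (Fin n) := by
  rw [← h𝒮.2.1]
  refine subset_antisymm (Set.iUnion₂_subset fun s hs ↦ ?_) (Set.iUnion₂_subset fun S hS x hx ↦ ?_)
  · obtain ⟨S, hS, hsS⟩ := h𝒮.exists_subset_of_mem_faces hs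
    exact Set.subset_iUnion₂_of_subset S hS (convexHull_mono (Finset.coe_subset.2 hsS))
  · have hne : S ≠ ∅ := by
      rintro rfl
      simp at hx
    exact SimplicialComplex.mem_space_iff.2 ⟨S, ⟨⟨S, hS, subset_rfl⟩, hne⟩, hx⟩

end IsSubdivision

/-- Sperner's lemma: any simplicial subdivision of the unit simplex with a Sperner
labeling contains a completely labeled simplex. -/
theorem sperner_lemma (n : ℕ) (𝒮 : Finset (Finset (Fin n → ℝ)))
    (h𝒮 : IsSubdivision n 𝒮) (ℓ : (Fin n → ℝ) → Fin n)
    (hℓ : IsSpernerLabeling n 𝒮 ℓ) :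
    ∃ S ∈ 𝒮, IsCompletelyLabeled n S ℓ := by
  obtain ⟨s, hs, hlabels⟩ := sperner_lemma_general h𝒮.finite_faces h𝒮.space_eq fun v hv ↦
    let ⟨S, hS, hvS⟩ := h𝒮.exists_subset_of_mem_faces hv
    hℓ S hS v (Finset.singleton_subset_iff.1 hvS)
  obtain ⟨S, hS, hsS⟩ := h𝒮.exists_subset_of_mem_faces hs
  exact ⟨S, hS, fun i ↦ (hlabels i).imp fun v hv ↦ ⟨hsS hv.1, hv.2⟩⟩
end
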